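/- Let N ≥ 1 and for each i ∈ Fin N let X i be a nonempty compact metric space with its Borel σ-algebra, and let u i : (Π j, X j) → ℝ be continuous. Then a mixed-strategy Nash equilibrium exists: there is a profile μ* ∈ Π i, ProbabilityMeasure (X i) such that for every agent i and every ν ∈ ProbabilityMeasure (X i), ∫ x, u i x ∂(Measure.pi (fun j => ↑(Function.update μ* i ν j))) ≤ ∫ x, u i x ∂(Measure.pi (fun j => ↑(μ* j))). -/

import Mathlib

open MeasureTheory

def SDom {V I : Type*} (r : I → V → ℕ) (T : Finset V) : Prop :=
  ∀ x, ∃ i, ∀ y ∈ T, r i x ≤ r i y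

theorem sdom_two {V I : Type*} [Fintype V] [DecidableEq V] [Fintype I] [DecidableEq I]
    (r : I → V → ℕ) (hr : ∀ i, Function.Injective (r i)) (D : Finset V)
    (hD : SDom r D) (hne : D.Nonempty) (hc : D.card + 1 = Fintype.card I)
    (hM : ∀ k, ∃ b, ∀ l, l ≠ k → ∃ y ∈ D, r l y < r l b) :
    ∃ x y, x ≠ y ∧ ∀ z, (z ∉ D ∧ SDom r (insert z D)) ↔ (z = x ∨ z = y) := by
  classical
  have h1 : ∀ i, ∃ m ∈ D, ∀ y ∈ D, r i m ≤ r i y := fun i => Finset.exists_min_image D (r i) hne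
  choose mn hmD hmin using h1
  have hsurj : ∀ x ∈ D, ∃ i, mn i = x := by
    intro x hx
    obtain ⟨i, hi⟩ := hD x
    exact ⟨i, hr i (le_antisymm (hmin i x hx) (hi _ (hmD i)))⟩
  obtain ⟨i, -, j, -, hij, hmij⟩ := Finset.exists_ne_map_eq_of_card_lt_of_maps_to
    (s := (Finset.univ : Finset I)) (t := D) (f := mn) (by rw [Finset.card_univ]; omega)
    (fun i _ => hmD i)
  have hsk : ∀ k, (k = i ∨ k = j) → ∀ y ∈ D, ∃ l, l ≠ k ∧ mn l = y := by
    intro k hk y hy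
    obtain ⟨l, hl⟩ := hsurj y hy
    by_cases hlk : l = k
    · rcases hk with hk | hk
      · exact ⟨j, by rw [hk]; exact hij.symm, by rw [← hmij, ← hk, ← hlk, hl]⟩
      · exact ⟨i, by rw [hk]; exact hij, by rw [hmij, ← hk, ← hlk, hl]⟩
    · exact ⟨l, hlk, hl⟩
  have hinj : ∀ k, (∀ y ∈ D, ∃ l, l ≠ k ∧ mn l = y) →
      ∀ l l', l ≠ k → l' ≠ k → mn l = mn l' → l = l' := by
    intro k hk l l' hl hl' h
    have := Finset.inj_on_of_surj_on_of_card_le (s := Finset.univ.erase k) (t := D)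
      (fun a _ => mn a) (fun a _ => hmD a)
      (fun y hy => by
        obtain ⟨l, hl, e⟩ := hk y hy
        exact ⟨l, by simp [hl], e⟩)
      (by rw [Finset.card_erase_of_mem (Finset.mem_univ k), Finset.card_univ]; omega)
    exact this (by simp [hl]) (by simp [hl']) h
  -- maximal elements
  have hx : ∀ k, ∃ x, (∀ l, l ≠ k → r l (mn l) < r l x) ∧
      ∀ z, (∀ l, l ≠ k → r l (mn l) < r l z) → r k z ≤ r k x := by
    intro k
    obtain ⟨b, hb⟩ := hM k
    obtain ⟨x, hx, hxm⟩ := Finset.exists_max_image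
      (Finset.univ.filter fun z => ∀ l, l ≠ k → r l (mn l) < r l z) (r k)
      ⟨b, by
        simp only [Finset.mem_filter, Finset.mem_univ, true_and]
        intro l hl
        obtain ⟨y, hy, hyb⟩ := hb l hl
        exact (hmin l y hy).trans_lt hyb⟩
    simp only [Finset.mem_filter, Finset.mem_univ, true_and] at hx hxm
    exact ⟨x, hx, hxm⟩
  choose X hX hXm using hx
  have hgood : ∀ k, (k = i ∨ k = j) → X k ∉ D ∧ SDom r (insert (X k) D) := by
    intro k hk
    constructor
    · intro h
      obtain ⟨l, hl, e⟩ := hsk k hk _ h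
      have := hX k l hl
      rw [e] at this
      exact lt_irrefl _ this
    · intro z
      by_cases hz : ∀ l, l ≠ k → r l (mn l) < r l z
      · refine ⟨k, ?_⟩
        have hzx := hXm k z hz
        intro y hy
        rw [Finset.mem_insert] at hy
        rcases hy with rfl | hy
        · exact hzx
        · obtain ⟨l, hl⟩ := hD (X k)
          by_cases hlk : l = k
          · subst hlk
            exact hzx.trans (hl y hy)
          · exact absurd (hX k l hlk) (not_lt.mpr (hl _ (hmD l)))
      · push Not at hz
        obtain ⟨l, hl, hzl⟩ := hz
        refine ⟨l, fun y hy => ?_⟩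
        rw [Finset.mem_insert] at hy
        rcases hy with rfl | hy
        · exact hzl.trans (hX k l hl).le
        · exact hzl.trans (hmin l y hy)
  refine ⟨X i, X j, ?_, ?_⟩
  · intro e
    obtain ⟨l, hl⟩ := hD (X i)
    have h2 := hl _ (hmD l)
    by_cases hli : l = i
    · rw [e] at h2
      exact absurd (hX j l (by rw [hli]; exact hij)) (not_lt.mpr h2)
    · exact absurd (hX i l hli) (not_lt.mpr h2)
  · intro x
    constructor
    · rintro ⟨hxD, hxd⟩
      obtain ⟨k, hk⟩ := hxd x
      have h3 : ∀ y ∈ D, ∃ l, l ≠ k ∧ mn l = y ∧ r l (mn l) < r l x := by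
        intro y hy
        have hyx : y ≠ x := fun h => hxD (h ▸ hy)
        obtain ⟨l, hl⟩ := hxd y
        have hly : mn l = y := hr l (le_antisymm (hmin l y hy)
          (hl _ (Finset.mem_insert_of_mem (hmD l))))
        refine ⟨l, ?_, hly, ?_⟩
        · rintro rfl
          exact hyx (hr l (le_antisymm (hl _ (Finset.mem_insert_self _ _))
            (hk _ (Finset.mem_insert_of_mem hy))))
        · rw [hly]
          exact lt_of_le_of_ne (hl _ (Finset.mem_insert_self _ _)) (fun h => hyx (hr l h))
      have hinjk := hinj k (fun y hy => by
        obtain ⟨l, a, b, _⟩ := h3 y hy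
        exact ⟨l, a, b⟩)
      have hkij : k = i ∨ k = j := by
        by_contra hcon
        push Not at hcon
        exact hij (hinjk i j hcon.1.symm hcon.2.symm hmij)
      have hxM : ∀ l, l ≠ k → r l (mn l) < r l x := by
        intro l hl
        obtain ⟨l', a, b, c⟩ := h3 _ (hmD l)
        rw [hinjk l l' hl a b.symm]
        exact c
      have hxX : x = X k := by
        apply hr k
        apply le_antisymm (hXm k x hxM)
        obtain ⟨l, hl⟩ := hxd (X k)
        by_cases hlk : l = k
        · subst hlk
          exact hl _ (Finset.mem_insert_self _ _)
        · exact absurd (hX k l hlk) (not_lt.mpr (hl _ (Finset.mem_insert_of_mem (hmD l))))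
      rcases hkij with rfl | rfl
      · exact Or.inl hxX
      · exact Or.inr hxX
    · rintro (rfl | rfl)
      · exact hgood i (Or.inl rfl)
      · exact hgood j (Or.inr rfl)

theorem scarf_rainbow {V I : Type*} [Fintype V] [DecidableEq V] [Fintype I] [DecidableEq I]
    (r : I → V → ℕ) (hr : ∀ i, Function.Injective (r i)) (b : I → V)
    (hb1 : ∀ i v, v ≠ b i → r i (b i) < r i v)
    (hb2 : ∀ i j v, v ∉ Set.range b → j ≠ i → r j v < r j (b i))
    (c : V → I) (hcb : ∀ i, c (b i) = i) (v0 : V) (hv0 : v0 ∉ Set.range b) (i0 : I) :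
    ∃ T : Finset V, SDom r T ∧ T.card = Fintype.card I ∧ T.image c = Finset.univ := by
  classical
  by_contra hno
  push Not at hno
  have hI : 0 < Fintype.card I := Fintype.card_pos_iff.mpr ⟨i0⟩
  have hbinj : Function.Injective b := fun i j h => by rw [← hcb i, h, hcb]
  let G : Finset V → Prop := fun D => D.image c = Finset.univ.erase i0 ∧ D.card + 1 = Fintype.card I
  let A : Finset (Finset V × V) :=
    Finset.univ.filter fun p => p.2 ∉ p.1 ∧ SDom r (insert p.2 p.1) ∧ G p.1
  let B : Finset (Finset V × V) :=
    Finset.univ.filter fun p => p.2 ∈ p.1 ∧ SDom r p.1 ∧ G (p.1.erase p.2)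
  have hAB : A.card = B.card := by
    apply Finset.card_nbij' (fun p => (insert p.2 p.1, p.2)) (fun p => (p.1.erase p.2, p.2))
    · rintro ⟨D, x⟩ h
      simp only [A, B, Finset.coe_filter, Finset.mem_univ, true_and, Set.mem_ofPred_eq] at h ⊢
      exact ⟨Finset.mem_insert_self _ _, h.2.1, by rw [Finset.erase_insert h.1]; exact h.2.2⟩
    · rintro ⟨D, x⟩ h
      simp only [A, B, Finset.coe_filter, Finset.mem_univ, true_and, Set.mem_ofPred_eq] at h ⊢
      exact ⟨Finset.notMem_erase _ _, by rw [Finset.insert_erase h.1]; exact h.2.1, h.2.2⟩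
    · rintro ⟨D, x⟩ h
      simp only [A, Finset.coe_filter, Finset.mem_univ, true_and, Set.mem_ofPred_eq] at h ⊢
      rw [Finset.erase_insert h.1]
    · rintro ⟨D, x⟩ h
      simp only [B, Finset.coe_filter, Finset.mem_univ, true_and, Set.mem_ofPred_eq] at h ⊢
      rw [Finset.insert_erase h.1]
  have hfib : ∀ S : Finset (Finset V × V), S.card =
      ∑ D : Finset V, (Finset.univ.filter fun x : V => (D, x) ∈ S).card := by
    intro S
    rw [Finset.card_eq_sum_card_fiberwise (f := Prod.fst) (t := Finset.univ) (by simp)]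
    refine Finset.sum_congr rfl fun D _ => ?_
    apply Finset.card_nbij' (fun p => p.2) (fun x => (D, x))
    · rintro ⟨E, x⟩ h
      simp at h ⊢
      rw [← h.2]; exact h.1
    · intro x h
      simpa using h
    · rintro ⟨E, x⟩ h
      simp at h ⊢
      exact h.2.symm
    · intro x h
      rfl
  have hBeven : Even B.card := by
    rw [hfib]
    refine Finset.even_sum _ fun T _ => ?_
    by_cases hex : ∃ x, (T, x) ∈ B
    · obtain ⟨x, hx⟩ := hex
      simp only [B, Finset.mem_filter, Finset.mem_univ, true_and] at hx
      obtain ⟨hxT, hdom, hG1, hG2⟩ := hx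
      have hcard : T.card = Fintype.card I := by
        rw [← hG2, Finset.card_erase_of_mem hxT]
        have := Finset.card_pos.mpr ⟨x, hxT⟩
        omega
      have hinj : Set.InjOn c (T.erase x : Finset V) := by
        apply Finset.injOn_of_card_image_eq
        rw [hG1, Finset.card_erase_of_mem (Finset.mem_univ _), Finset.card_univ]
        omega
      have hcx : c x ≠ i0 := by
        intro h
        apply hno T hdom hcard
        rw [← Finset.insert_erase hxT, Finset.image_insert, hG1, h,
          Finset.insert_erase (Finset.mem_univ _)]
      have : c x ∈ (T.erase x).image c := by rw [hG1]; simp [hcx]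
      obtain ⟨x', hx', hcx'⟩ := Finset.mem_image.mp this
      have hx'2 := Finset.mem_erase.mp hx'
      have : (Finset.univ.filter fun z : V => (T, z) ∈ B) = {x, x'} := by
        ext z
        simp only [B, Finset.mem_filter, Finset.mem_univ, true_and, Finset.mem_insert,
          Finset.mem_singleton]
        constructor
        · rintro ⟨hzT, -, hz1, hz2⟩
          by_contra hcon
          push Not at hcon
          have hz : z ∈ T.erase x := Finset.mem_erase.mpr ⟨hcon.1, hzT⟩
          have h4 : c z ∈ (T.erase z).image c := by
            rw [hz1, ← hG1]
            exact Finset.mem_image_of_mem _ hz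
          obtain ⟨w, hw, hwz⟩ := Finset.mem_image.mp h4
          have hw2 := Finset.mem_erase.mp hw
          by_cases hwx : w = x
          · subst hwx
            exact hcon.2 (hinj hz hx' (by rw [hcx', hwz]))
          · exact hw2.1 (hinj (Finset.mem_erase.mpr ⟨hwx, hw2.2⟩) hz hwz)
        · rintro (rfl | rfl)
          · exact ⟨hxT, hdom, hG1, hG2⟩
          · refine ⟨hx'2.2, hdom, ?_, by rw [Finset.card_erase_of_mem hx'2.2]; omega⟩
            rw [← hG1]
            have e : ∀ a d : V, a ∈ T → d ∈ T → a ≠ d → c a = c d →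
                (T.erase a).image c ⊆ (T.erase d).image c := by
              intro a d ha hd hne hcc i hi
              obtain ⟨w, hw, hwi⟩ := Finset.mem_image.mp hi
              have hw2 := Finset.mem_erase.mp hw
              rw [Finset.mem_image]
              by_cases hwd : w = d
              · exact ⟨a, Finset.mem_erase.mpr ⟨hne, ha⟩, by rw [hcc, ← hwd, hwi]⟩
              · exact ⟨w, Finset.mem_erase.mpr ⟨hwd, hw2.2⟩, hwi⟩
            exact Finset.Subset.antisymm (e _ _ hx'2.2 hxT hx'2.1 hcx')
              (e _ _ hxT hx'2.2 hx'2.1.symm hcx'.symm)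
      rw [this, Finset.card_pair hx'2.1.symm]
      exact even_two
    · push Not at hex
      rw [Finset.filter_false_of_mem (fun x _ => hex x)]
      simp
  let D0 : Finset V := (Finset.univ.erase i0).image b
  have hD0G : G D0 := by
    constructor
    · rw [Finset.image_image]
      ext i
      simp [hcb]
    · rw [Finset.card_image_of_injective _ hbinj, Finset.card_erase_of_mem (Finset.mem_univ _),
        Finset.card_univ]
      omega
  have hAodd : Odd A.card := by
    rw [hfib, ← Finset.add_sum_erase _ _ (Finset.mem_univ D0)]
    apply Odd.add_even
    · obtain ⟨x, hx, hxm⟩ := Finset.exists_max_image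
        (Finset.univ.filter fun z => z ∉ Set.range b) (r i0) ⟨v0, by simpa using hv0⟩
      simp only [Finset.mem_filter, Finset.mem_univ, true_and] at hx hxm
      have hxD : ∀ z, z ∉ Set.range b → z ∉ D0 := by
        intro z hz h
        obtain ⟨i, -, hi⟩ := Finset.mem_image.mp h
        exact hz ⟨i, hi⟩
      have hbD : ∀ i, i ≠ i0 → b i ∈ D0 := fun i hi =>
        Finset.mem_image_of_mem _ (by simp [hi])
      have hreal : ∀ z i w, z ∉ Set.range b → (∀ y ∈ insert w D0, r i z ≤ r i y) → i = i0 := by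
        intro z i w hz h
        by_contra hi
        have h5 := h _ (Finset.mem_insert_of_mem (hbD i hi))
        have := hb1 i z (fun e => hz ⟨i, e.symm⟩)
        omega
      have : (Finset.univ.filter fun z : V => (D0, z) ∈ A) = {x} := by
        ext z
        simp only [A, Finset.mem_filter, Finset.mem_univ, true_and, Finset.mem_singleton]
        constructor
        · rintro ⟨hz, hd, -⟩
          obtain ⟨i, hi⟩ := hd x
          obtain rfl := hreal x i z hx hi
          have h6 := hi z (Finset.mem_insert_self _ _)
          by_cases hzr : z ∈ Set.range b
          · obtain ⟨k, rfl⟩ := hzr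
            by_cases hk : k = i
            · subst hk
              have := hb1 k x (fun e => hx ⟨k, e.symm⟩)
              omega
            · exact absurd (hbD k hk) hz
          · exact hr i (le_antisymm (hxm z hzr) h6)
        · rintro rfl
          refine ⟨hxD _ hx, ?_, hD0G⟩
          intro w
          by_cases hw : w ∈ Set.range b
          · obtain ⟨k, rfl⟩ := hw
            refine ⟨k, fun y _ => ?_⟩
            by_cases hy : y = b k
            · rw [hy]
            · exact (hb1 k y hy).le
          · refine ⟨i0, fun y hy => ?_⟩
            rcases Finset.mem_insert.mp hy with rfl | hy
            · exact hxm w hw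
            · obtain ⟨k, hk, rfl⟩ := Finset.mem_image.mp hy
              exact (hb2 k i0 w hw (Finset.ne_of_mem_erase hk).symm).le
      rw [this]; simp
    · refine Finset.even_sum _ fun D hD => ?_
      have hDne := Finset.ne_of_mem_erase hD
      by_cases hex : ∃ x, (D, x) ∈ A
      · obtain ⟨x, hx⟩ := hex
        simp only [A, Finset.mem_filter, Finset.mem_univ, true_and] at hx
        obtain ⟨hxD, hdom, hG⟩ := hx
        have hG1 := hG.1
        have hG2 := hG.2
        have hdomD : SDom r D := fun z => by
          obtain ⟨i, hi⟩ := hdom z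
          exact ⟨i, fun y hy => hi y (Finset.mem_insert_of_mem hy)⟩
        have hw : ∃ w ∈ D, w ∉ Set.range b := by
          by_contra hcon
          push Not at hcon
          apply hDne
          apply Finset.eq_of_subset_of_card_le
          · intro w hw
            obtain ⟨k, rfl⟩ := hcon w hw
            apply Finset.mem_image_of_mem
            rw [← hG1]
            have := Finset.mem_image_of_mem c hw
            rwa [hcb] at this
          · have := hD0G.2
            omega
        obtain ⟨w, hwD, hwr⟩ := hw
        obtain ⟨p, q, hpq, hall⟩ := sdom_two r hr D hdomD ⟨w, hwD⟩ hG2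
          (fun k => ⟨b k, fun l hl => ⟨w, hwD, hb2 k l w hwr hl⟩⟩)
        have : (Finset.univ.filter fun z : V => (D, z) ∈ A) = {p, q} := by
          ext z
          simp only [A, Finset.mem_filter, Finset.mem_univ, true_and, Finset.mem_insert,
            Finset.mem_singleton, ← hall z]
          tauto
        rw [this, Finset.card_pair hpq]
        exact even_two
      · push Not at hex
        rw [Finset.filter_false_of_mem (fun x _ => hex x)]
        simp
  rw [hAB] at hAodd
  exact (Nat.not_even_iff_odd.mpr hAodd) hBeven

theorem exists_grid_ge {I : Type*} [Fintype I] [Nonempty I] (n : ℕ) (a : I → ℕ)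
    (h : ∑ i, a i ≤ n) : ∃ x : I → ℕ, ∑ i, x i = n ∧ ∀ i, a i ≤ x i := by
  classical
  obtain ⟨i0⟩ := ‹Nonempty I›
  refine ⟨fun i => a i + if i = i0 then n - ∑ i, a i else 0, ?_, fun i => Nat.le_add_right _ _⟩
  rw [Finset.sum_add_distrib]
  simp
  omega

theorem sperner_grid {I : Type*} [Fintype I] [DecidableEq I] [Nonempty I] (n : ℕ)
    (c : (I → ℕ) → I) :
    ∃ y : I → ℕ, ∑ i, y i = n ∧ ∀ i, y i ≤ Fintype.card I ∨
      ∃ z : I → ℕ, ∑ i, z i = n ∧ c z = i ∧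
        ∀ j, z j ≤ y j + Fintype.card I ∧ y j ≤ z j + Fintype.card I := by
  classical
  let X := {x : I → ℕ // x ∈ Finset.piAntidiag (Finset.univ : Finset I) n}
  have hXs : ∀ x : X, ∑ i, x.1 i = n := fun x => (Finset.mem_piAntidiag.mp x.2).1
  have hXle : ∀ (x : X) i, x.1 i ≤ n := fun x i => by
    refine le_trans ?_ (hXs x).le
    exact Finset.single_le_sum (f := x.1) (fun _ _ => Nat.zero_le _) (Finset.mem_univ i)
  let mk : ∀ x : I → ℕ, ∑ i, x i = n → X := fun x hx =>
    ⟨x, Finset.mem_piAntidiag.mpr ⟨hx, fun _ _ => Finset.mem_univ _⟩⟩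
  let V := X ⊕ I
  let K := Fintype.card V
  let e : V ≃ Fin K := Fintype.equivFin V
  let h : I → V → ℕ := fun i v => Sum.elim (fun x : X => x.1 i + 1)
    (fun j => if j = i then 0 else n + 2) v
  let r : I → V → ℕ := fun i v => h i v * K + (e v : ℕ)
  have hlt : ∀ i v w, h i v < h i w → r i v < r i w := by
    intro i v w hvw
    have h1 := (e v).2
    have h2 : (h i v + 1) * K ≤ h i w * K := Nat.mul_le_mul_right _ hvw
    simp only [r]
    rw [add_mul] at h2
    omega
  have hr : ∀ i, Function.Injective (r i) := by
    intro i v w hvw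
    have : h i v = h i w := by
      rcases lt_trichotomy (h i v) (h i w) with h1 | h1 | h1
      · exact absurd hvw (hlt i v w h1).ne
      · exact h1
      · exact absurd hvw (hlt i w v h1).ne'
    simp only [r, this] at hvw
    apply e.injective
    apply Fin.ext
    omega
  have hnr : ∀ x : X, (Sum.inl x : V) ∉ Set.range (Sum.inr : I → V) := by
    rintro x ⟨i, hi⟩
    cases hi
  obtain ⟨x0, hx0, -⟩ := exists_grid_ge (I := I) n (fun _ => 0) (by simp)
  obtain ⟨T, hdom, hcard, him⟩ := scarf_rainbow r hr (Sum.inr : I → V)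
    (by
      intro i v hv
      apply hlt
      rcases v with x | j
      · simp [h]
      · have : j ≠ i := fun e => hv (by rw [e])
        simp [h, this])
    (by
      intro i j v hv hji
      apply hlt
      rcases v with x | k
      · have := hXle x j
        simp [h, hji.symm]
        omega
      · exact absurd ⟨k, rfl⟩ hv)
    (fun v => Sum.elim (fun x : X => c x.1) id v) (fun i => rfl) (Sum.inl (mk x0 hx0))
    (hnr _) (Classical.arbitrary I)
  have hTne : T.Nonempty := by
    rw [← Finset.card_pos, hcard]
    exact Fintype.card_pos
  have hmin : ∀ i, ∃ v ∈ T, ∀ w ∈ T, h i v ≤ h i w := fun i =>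
    Finset.exists_min_image T (h i) hTne
  choose mn hmT hmn using hmin
  have hsum : n < ∑ i, h i (mn i) := by
    by_contra hcon
    push Not at hcon
    obtain ⟨x, hx, hxa⟩ := exists_grid_ge n _ hcon
    obtain ⟨i, hi⟩ := hdom (Sum.inl (mk x hx))
    have h1 := hi _ (hmT i)
    have h2 : h i (mn i) < h i (Sum.inl (mk x hx)) := Nat.lt_succ_of_le (hxa i)
    have h3 := hlt _ _ _ h2
    omega
  have hbound : ∀ x : X, Sum.inl x ∈ T → ∀ i, h i (mn i) ≤ x.1 i + 1 ∧
      x.1 i + 1 ≤ h i (mn i) + Fintype.card I := by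
    intro x hx
    have h1 : ∀ i, h i (mn i) ≤ x.1 i + 1 := fun i => hmn i _ hx
    intro i
    refine ⟨h1 i, ?_⟩
    have h2 : ∑ j, (x.1 j + 1) = n + Fintype.card I := by
      rw [Finset.sum_add_distrib, hXs]; simp
    rw [← Finset.add_sum_erase _ _ (Finset.mem_univ i)] at h2 hsum
    have h3 : ∑ j ∈ Finset.univ.erase i, h j (mn j) ≤ ∑ j ∈ Finset.univ.erase i, (x.1 j + 1) :=
      Finset.sum_le_sum fun j _ => h1 j
    omega
  have hcol : ∀ i, Sum.inr i ∈ T ∨ ∃ x : X, Sum.inl x ∈ T ∧ c x.1 = i := by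
    intro i
    have : i ∈ T.image (fun v => Sum.elim (fun x : X => c x.1) id v) := by
      rw [him]; exact Finset.mem_univ i
    obtain ⟨v, hv, hvi⟩ := Finset.mem_image.mp this
    rcases v with x | j
    · exact Or.inr ⟨x, hv, hvi⟩
    · left
      have : j = i := hvi
      rwa [← this]
  have hz : ∀ i, Sum.inr i ∈ T → h i (mn i) = 0 := by
    intro i hi
    have := hmn i _ hi
    simpa [h] using this
  obtain ⟨y, hy⟩ : ∃ y : X, Sum.inl y ∈ T := by
    by_contra hcon
    push Not at hcon
    have : ∑ i, h i (mn i) = 0 := Finset.sum_eq_zero fun i _ => by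
      rcases hcol i with h1 | ⟨x, hx, -⟩
      · exact hz i h1
      · exact absurd hx (hcon x)
    omega
  refine ⟨y.1, hXs y, fun i => ?_⟩
  rcases hcol i with h1 | ⟨x, hx, hxi⟩
  · left
    have := (hbound y hy i).2
    rw [hz i h1] at this
    omega
  · right
    refine ⟨x.1, hXs x, hxi, fun j => ?_⟩
    have h1 := hbound x hx j
    have h2 := hbound y hy j
    omega

theorem kkm_simplex {I : Type*} [Fintype I] [DecidableEq I] [Nonempty I]
    (h : I → stdSimplex ℝ I → ℝ) (hc : ∀ i, Continuous (h i))
    (h1 : ∀ x, ∃ i, h i x ≤ 0) (h2 : ∀ (x : stdSimplex ℝ I) i, x.1 i = 0 → h i x ≤ 0) :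
    ∃ x, ∀ i, h i x ≤ 0 := by
  classical
  choose col hcol using h1
  let P : ℕ → (I → ℕ) → stdSimplex ℝ I := fun n x =>
    if hx : ∑ i, x i = n + 1 then ⟨fun i => (x i : ℝ) / (n + 1 : ℝ), fun i => by positivity, by
      rw [← Finset.sum_div, ← Nat.cast_sum, hx]
      push_cast
      exact div_self (by positivity)⟩
    else Classical.arbitrary _
  have hP : ∀ n x, ∑ i, x i = n + 1 → ∀ i, (P n x).1 i = (x i : ℝ) / (n + 1 : ℝ) := by
    intro n x hx i
    simp only [P, dif_pos hx]
  choose y hy hyi using fun n : ℕ => sperner_grid (n + 1) (fun x => col (P n x))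
  obtain ⟨x, φ, hφ, hlim⟩ := CompactSpace.tendsto_subseq (fun n => P n (y n))
  refine ⟨x, fun i => ?_⟩
  by_contra hpos
  push Not at hpos
  have hxi : 0 < x.1 i := by
    rcases (x.2.1 i).lt_or_eq with h3 | h3
    · exact h3
    · exact absurd (h2 x i h3.symm) (not_le.mpr hpos)
  obtain ⟨ε, hε, hball⟩ := Metric.isOpen_iff.mp ((isOpen_Ioi (a := (0 : ℝ))).preimage (hc i)) x hpos
  set m : ℝ := (Fintype.card I : ℝ) with hm
  have hm0 : Filter.Tendsto (fun n : ℕ => m / ((φ n : ℝ) + 1)) Filter.atTop (nhds 0) := by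
    have h4 : Filter.Tendsto (fun n : ℕ => m / ((n : ℝ) + 1)) Filter.atTop (nhds 0) := by
      have := (tendsto_one_div_add_atTop_nhds_zero_nat (𝕜 := ℝ)).const_mul m
      simpa [mul_one_div, div_eq_mul_inv] using this
    exact h4.comp hφ.tendsto_atTop
  have hδ : 0 < min (ε / 2) (x.1 i / 2) := by positivity
  have e1 := hm0.eventually (gt_mem_nhds hδ)
  have e2 := (Metric.tendsto_nhds.mp hlim) _ hδ
  obtain ⟨n, hn1, hn2⟩ := (e1.and e2).exists
  obtain ⟨a1, a2⟩ := lt_min_iff.mp hn1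
  obtain ⟨b1, b2⟩ := lt_min_iff.mp hn2
  simp only [Function.comp] at b1 b2
  have hd : (0 : ℝ) < (φ n : ℝ) + 1 := by positivity
  rcases hyi (φ n) i with h5 | ⟨z, hz, hzc, hzy⟩
  · have h6 : dist ((P (φ n) (y (φ n))).1 i) (x.1 i) ≤ dist (P (φ n) (y (φ n))) x :=
      dist_le_pi_dist _ _ i
    rw [hP _ _ (hy _), Real.dist_eq] at h6
    have h7 : (y (φ n) i : ℝ) / ((φ n : ℝ) + 1) ≤ m / ((φ n : ℝ) + 1) := by
      apply div_le_div_of_nonneg_right _ hd.le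
      rw [hm]; exact_mod_cast h5
    have := (abs_lt.mp (h6.trans_lt b2)).1
    linarith
  · have h6 : dist (P (φ n) z) (P (φ n) (y (φ n))) ≤ m / ((φ n : ℝ) + 1) := by
      rw [Subtype.dist_eq, dist_pi_le_iff (by positivity)]
      intro j
      rw [hP _ _ hz, hP _ _ (hy _), Real.dist_eq, ← sub_div, abs_div, abs_of_pos hd]
      apply div_le_div_of_nonneg_right _ hd.le
      obtain ⟨c1, c2⟩ := hzy j
      have c1' : (z j : ℝ) ≤ y (φ n) j + m := by rw [hm]; exact_mod_cast c1
      have c2' : (y (φ n) j : ℝ) ≤ z j + m := by rw [hm]; exact_mod_cast c2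
      rw [abs_le]
      constructor <;> linarith
    have h7 : P (φ n) z ∈ Metric.ball x ε := by
      rw [Metric.mem_ball]
      have := dist_triangle (P (φ n) z) (P (φ n) (y (φ n))) x
      linarith
    have h8 : 0 < h i (P (φ n) z) := hball h7
    have h9 := hcol (P (φ n) z)
    rw [hzc] at h9
    linarith

theorem vi_simplex {I : Type*} [Fintype I] [DecidableEq I] [Nonempty I]
    (f : I → stdSimplex ℝ I → ℝ) (hc : ∀ i, Continuous (f i))
    (h0 : ∀ x : stdSimplex ℝ I, ∑ i, x.1 i * f i x = 0) :
    ∃ x, ∀ i, f i x ≤ 0 := by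
  have hxc : ∀ i, Continuous fun x : stdSimplex ℝ I => x.1 i := fun i =>
    (continuous_apply i).comp continuous_subtype_val
  have hsum : ∀ x : stdSimplex ℝ I,
      ∑ i, (x.1 i * (∑ j, max (f j x) 0) - max (f i x) 0) = 0 := by
    intro x
    rw [Finset.sum_sub_distrib, ← Finset.sum_mul, x.2.2]
    ring
  obtain ⟨x, hx⟩ := kkm_simplex (fun i x => x.1 i * (∑ j, max (f j x) 0) - max (f i x) 0)
    (fun i => by
      refine ((hxc i).mul (continuous_finsetSum _ fun j _ => ?_)).sub ?_
      · exact (hc j).max continuous_const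
      · exact (hc i).max continuous_const)
    (fun x => by
      by_contra hcon
      push Not at hcon
      have := Finset.sum_pos (fun i _ => hcon i) Finset.univ_nonempty
      rw [hsum x] at this
      exact lt_irrefl _ this)
    (fun x i hi => by simp [hi])
  refine ⟨x, ?_⟩
  have heq := (Finset.sum_eq_zero_iff_of_nonpos (fun i _ => hx i)).mp (hsum x)
  by_contra hcon
  push Not at hcon
  obtain ⟨k, hk⟩ := hcon
  have hS : 0 < ∑ j, max (f j x) 0 :=
    Finset.sum_pos' (fun j _ => le_max_right _ _) ⟨k, Finset.mem_univ k, lt_max_of_lt_left hk⟩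
  have hpos : ∀ i, 0 < x.1 i → 0 < f i x := by
    intro i hi
    have h1 := heq i (Finset.mem_univ i)
    have h2 := mul_pos hi hS
    by_contra h3
    rw [max_eq_right (not_lt.mp h3)] at h1
    linarith
  have hxk : 0 < x.1 k := by
    have h1 := heq k (Finset.mem_univ k)
    rw [max_eq_left hk.le] at h1
    by_contra h3
    have := mul_nonpos_of_nonpos_of_nonneg (not_lt.mp h3) hS.le
    linarith
  have : 0 < ∑ i, x.1 i * f i x := by
    refine Finset.sum_pos' (fun i _ => ?_) ⟨k, Finset.mem_univ k, mul_pos hxk hk⟩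
    rcases (x.2.1 i).lt_or_eq with h3 | h3
    · exact (mul_pos h3 (hpos i h3)).le
    · change 0 ≤ x.1 i * f i x
      rw [show x.1 i = 0 from h3.symm, zero_mul]
  rw [h0] at this
  exact lt_irrefl _ this

noncomputable def mixPM {Y K : Type*} [MeasurableSpace Y] [Fintype K] (t : stdSimplex ℝ K)
    (ν : K → ProbabilityMeasure Y) : ProbabilityMeasure Y :=
  ⟨∑ k, ENNReal.ofReal (t.1 k) • (ν k : Measure Y), ⟨by
    rw [Measure.finsetSum_apply]
    simp only [Measure.smul_apply, measure_univ, smul_eq_mul, mul_one]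
    rw [← ENNReal.ofReal_sum_of_nonneg (fun i _ => t.2.1 i), t.2.2, ENNReal.ofReal_one]⟩⟩

theorem mixPM_coe {Y K : Type*} [MeasurableSpace Y] [Fintype K] (t : stdSimplex ℝ K)
    (ν : K → ProbabilityMeasure Y) :
    (mixPM t ν : Measure Y) = ∑ k, ENNReal.ofReal (t.1 k) • (ν k : Measure Y) := rfl

theorem integral_mix {Y K : Type*} [MeasurableSpace Y] [Fintype K] (t : stdSimplex ℝ K)
    (ν : K → Measure Y) (f : Y → ℝ) (hf : ∀ k, Integrable f (ν k)) :
    ∫ y, f y ∂(∑ k, ENNReal.ofReal (t.1 k) • ν k) = ∑ k, t.1 k * ∫ y, f y ∂(ν k) := by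
  rw [integral_finsetSum_measure (fun k _ => (hf k).smul_measure ENNReal.ofReal_ne_top)]
  refine Finset.sum_congr rfl fun k _ => ?_
  rw [integral_smul_measure, ENNReal.toReal_ofReal (t.2.1 k), smul_eq_mul]

theorem continuous_mixPM {Y K : Type*} [MeasurableSpace Y] [TopologicalSpace Y]
    [OpensMeasurableSpace Y] [Fintype K] (ν : K → ProbabilityMeasure Y) :
    Continuous fun t : stdSimplex ℝ K => mixPM t ν := by
  rw [continuous_iff_continuousAt]
  intro t
  rw [ContinuousAt, ProbabilityMeasure.tendsto_iff_forall_integral_tendsto]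
  intro f
  simp only [mixPM_coe]
  have hi : ∀ k, Integrable f (ν k : Measure Y) := fun k => f.integrable _
  simp only [fun s : stdSimplex ℝ K => integral_mix s (fun k => (ν k : Measure Y)) f hi]
  have : Continuous fun s : stdSimplex ℝ K => ∑ k, s.1 k * ∫ y, f y ∂(ν k : Measure Y) :=
    continuous_finsetSum _ fun k _ =>
      ((continuous_apply k).comp continuous_subtype_val).mul continuous_const
  exact this.tendsto t

theorem pi_update_mix {ι K : Type*} [Fintype ι] [DecidableEq ι] [Fintype K] {X : ι → Type*}
    [∀ i, MeasurableSpace (X i)] (μ : Π i, ProbabilityMeasure (X i)) (i : ι)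
    (t : stdSimplex ℝ K) (ν : K → ProbabilityMeasure (X i)) :
    Measure.pi (fun j => (Function.update μ i (mixPM t ν) j : Measure (X j))) =
      ∑ k, ENNReal.ofReal (t.1 k) •
        Measure.pi (fun j => (Function.update μ i (ν k) j : Measure (X j))) := by
  have key : ∀ (ρ : ProbabilityMeasure (X i)) (s : Π j, Set (X j)),
      ∏ j, (Function.update μ i ρ j : Measure (X j)) (s j) =
        (ρ : Measure (X i)) (s i) * ∏ j ∈ Finset.univ.erase i, (μ j : Measure (X j)) (s j) := by
    intro ρ s
    rw [← Finset.mul_prod_erase _ _ (Finset.mem_univ i), Function.update_self]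
    congr 1
    refine Finset.prod_congr rfl fun j hj => ?_
    rw [Function.update_of_ne (Finset.ne_of_mem_erase hj)]
  apply Measure.pi_eq
  intro s hs
  rw [key, mixPM_coe, Measure.finsetSum_apply, Measure.finsetSum_apply, Finset.sum_mul]
  refine Finset.sum_congr rfl fun k _ => ?_
  rw [Measure.smul_apply, Measure.smul_apply, Measure.pi_pi, key, smul_eq_mul, smul_eq_mul,
    mul_assoc]

theorem mixed_nash_exists
    (N : ℕ) (hN : 1 ≤ N) (X : Fin N → Type*)
    [∀ i, MetricSpace (X i)] [∀ i, CompactSpace (X i)] [∀ i, Nonempty (X i)]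
    [∀ i, MeasurableSpace (X i)] [∀ i, BorelSpace (X i)]
    (u : Π _ : Fin N, (Π j, X j) → ℝ) (hu : ∀ i, Continuous (u i)) :
    ∃ μstar : Π i, ProbabilityMeasure (X i),
      ∀ i (ν : ProbabilityMeasure (X i)),
        ∫ x, u i x ∂(Measure.pi (fun j => (Function.update μstar i ν j : Measure (X j)))) ≤
        ∫ x, u i x ∂(Measure.pi (fun j => (μstar j : Measure (X j)))) := by
  classical
  let U : Fin N → (Π j, ProbabilityMeasure (X j)) → ℝ := fun i μ =>
    ∫ x, u i x ∂(Measure.pi (fun j => (μ j : Measure (X j))))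
  have hUc : ∀ i, Continuous (U i) := by
    intro i
    rw [continuous_iff_continuousAt]
    intro μ
    have h1 := (ProbabilityMeasure.continuous_pi (α := X)).tendsto μ
    exact (ProbabilityMeasure.tendsto_iff_forall_integral_tendsto.mp h1)
      (BoundedContinuousFunction.mkOfCompact ⟨u i, hu i⟩)
  have hint : ∀ i (μ : Π j, ProbabilityMeasure (X j)),
      Integrable (u i) (Measure.pi (fun j => (μ j : Measure (X j)))) := fun i μ =>
    (BoundedContinuousFunction.mkOfCompact ⟨u i, hu i⟩).integrable _
  let F : (Π j, ProbabilityMeasure (X j)) → (Π j, ProbabilityMeasure (X j)) → ℝ := fun μ ν =>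
    ∑ i, (U i (Function.update μ i (ν i)) - U i μ)
  have hFc : ∀ ν, Continuous fun μ => F μ ν := by
    intro ν
    refine continuous_finsetSum _ fun i _ => Continuous.sub ?_ (hUc i)
    exact (hUc i).comp (continuous_id.update i continuous_const)
  suffices h : (⋂ ν, {μ | F μ ν ≤ 0}).Nonempty by
    obtain ⟨μ, hμ⟩ := h
    refine ⟨μ, fun i ν => ?_⟩
    have h1 : F μ (Function.update μ i ν) ≤ 0 := Set.mem_iInter.mp hμ (Function.update μ i ν)
    have h2 : F μ (Function.update μ i ν) = U i (Function.update μ i ν) - U i μ := by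
      simp only [F]
      rw [Finset.sum_eq_single i]
      · rw [Function.update_self]
      · intro j _ hj
        rw [Function.update_of_ne hj, Function.update_eq_self, sub_self]
      · simp
    rw [h2] at h1
    exact sub_nonpos.mp h1
  have hfin : ∀ s : Finset (Π j, ProbabilityMeasure (X j)),
      (Set.univ ∩ ⋂ ν ∈ s, {μ | F μ ν ≤ 0}).Nonempty := by
    intro s
    rcases s.eq_empty_or_nonempty with rfl | hs
    · have : ∀ j, Nonempty (ProbabilityMeasure (X j)) := fun j =>
        ⟨⟨Measure.dirac (Classical.arbitrary _), inferInstance⟩⟩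
      simpa using (Set.univ_nonempty : (Set.univ : Set (Π j, ProbabilityMeasure (X j))).Nonempty)
    have : Nonempty s := hs.to_subtype
    let M : stdSimplex ℝ s → (Π j, ProbabilityMeasure (X j)) := fun t j =>
      mixPM t (fun k : s => k.1 j)
    have hMc : Continuous M := continuous_pi fun j => continuous_mixPM _
    obtain ⟨t, ht⟩ := vi_simplex (fun (k : s) t => F (M t) k.1) (fun k => (hFc k.1).comp hMc)
      (by
        intro t
        simp only [F, Finset.mul_sum]
        rw [Finset.sum_comm]
        refine Finset.sum_eq_zero fun i _ => ?_
        simp only [mul_sub]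
        rw [Finset.sum_sub_distrib, ← Finset.sum_mul, t.2.2, one_mul, sub_eq_zero]
        have h1 : U i (Function.update (M t) i (mixPM t (fun k : s => k.1 i))) =
            ∑ k : s, t.1 k * U i (Function.update (M t) i (k.1 i)) := by
          simp only [U]
          rw [pi_update_mix]
          exact integral_mix t _ _ (fun k => hint i _)
        rw [← h1]
        congr 1
        exact Function.update_eq_self i (M t))
    refine ⟨M t, Set.mem_univ _, ?_⟩
    simp only [Set.mem_iInter]
    exact fun ν hν => ht ⟨ν, hν⟩
  have := isCompact_univ.inter_iInter_nonempty (fun ν => {μ | F μ ν ≤ 0})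
    (fun ν => isClosed_le (hFc ν) continuous_const) hfin
  simpa using this
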